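/- Let Γ be a lattice in G = PSL(2,ℂ). Then the collection {xH : x ∈ Γ\G and xH is closed in Γ\G} of closed H-orbits is a countable collection of subsets of Γ\G. (This is the homogeneous formulation of the statement that a hyperbolic 3-manifold of finite volume contains at most countably many properly immersed geodesic planes.) -/

import Mathlib

open scoped MatrixGroups
open Matrix Filter

noncomputable section

/-- `SL(2,ℂ)`. -/
abbrev SL2C := Matrix.SpecialLinearGroup (Fin 2) ℂ

instance : TopologicalSpace SL2C := instTopologicalSpaceSubtype

/-- `G = PSL(2,ℂ) = SL(2,ℂ)/{±I}`, with the quotient topology. -/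
abbrev PSL2C := Matrix.ProjectiveSpecialLinearGroup (Fin 2) ℂ

/-- The projection `π : SL(2,ℂ) → PSL(2,ℂ)`. -/
def pr : SL2C →* PSL2C := QuotientGroup.mk' _

/-- The upper triangular unipotent matrix `[[1, t],[0, 1]]` as an element of `SL(2,ℂ)`. -/
def uMat (t : ℂ) : SL2C := ⟨!![1, t; 0, 1], by simp [Matrix.det_fin_two_of]⟩

/-- `u_t = π [[1, t],[0, 1]]` for `t ∈ ℝ`. -/
def uu (t : ℝ) : PSL2C := pr (uMat t)

/-- `v_s = π [[1, is],[0, 1]]` for `s ∈ ℝ`. -/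
def vv (s : ℝ) : PSL2C := pr (uMat (s * Complex.I))

/-- The subgroup `U = {u_t : t ∈ ℝ}` as a subset of `PSL(2,ℂ)`. -/
def Uset : Set PSL2C := Set.range uu

/-- The subgroup `V = {v_s : s ∈ ℝ}` as a subset of `PSL(2,ℂ)`. -/
def Vset : Set PSL2C := Set.range vv

/-- The subgroup `N = {π [[1, z],[0,1]] : z ∈ ℂ}` as a subset of `PSL(2,ℂ)`. -/
def Nset : Set PSL2C := {x | ∃ z : ℂ, x = pr (uMat z)}

/-- `H = π (SL(2,ℝ))`, the image in `PSL(2,ℂ)` of the real matrices. -/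
def Hset : Set PSL2C :=
  {x | ∃ g : Matrix.SpecialLinearGroup (Fin 2) ℝ,
    x = pr (Matrix.SpecialLinearGroup.map (algebraMap ℝ ℂ) g)}

/-- The upper triangular matrix `[[a, z],[0, a⁻¹]]` as an element of `SL(2,ℂ)`,
for a nonzero real `a`. -/
def tri (a : ℝ) (ha : a ≠ 0) (z : ℂ) : SL2C :=
  ⟨!![(a : ℂ), z; 0, (a : ℂ)⁻¹], by
    have h : (a : ℂ) ≠ 0 := by exact_mod_cast ha
    simp [Matrix.det_fin_two_of, mul_inv_cancel₀ h]⟩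

/-- `AN = {π [[a, z],[0, a⁻¹]] : a > 0 real, z ∈ ℂ}`. -/
def ANset : Set PSL2C := {x | ∃ (a : ℝ) (ha : 0 < a) (z : ℂ), x = pr (tri a ha.ne' z)}

/-- `AV = {π [[a, ib],[0, a⁻¹]] : a > 0 real, b ∈ ℝ}`. -/
def AVset : Set PSL2C :=
  {x | ∃ (a : ℝ) (ha : 0 < a) (b : ℝ), x = pr (tri a ha.ne' (b * Complex.I))}

/-- `A = {π diag(a, a⁻¹) : a > 0 real}`. -/
def Aset : Set PSL2C := {x | ∃ (a : ℝ) (ha : 0 < a), x = pr (tri a ha.ne' 0)}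

variable (Γ : Subgroup PSL2C)

/-- The space `Γ\\G` of right cosets `Γg`, with the quotient topology. -/
abbrev XΓ := Quotient (QuotientGroup.rightRel Γ)

/-- The natural projection `G → Γ\\G`. -/
def mkX (g : PSL2C) : XΓ Γ := Quotient.mk'' g

/-- The right translation action of `G` on `Γ\\G`: `(Γg₀)·g = Γ(g₀g)`. -/
def act (x : XΓ Γ) (g : PSL2C) : XΓ Γ :=
  Quotient.map' (fun h => h * g)
    (fun a b hab => by
      rw [QuotientGroup.rightRel_apply] at hab ⊢
      simpa [_root_.mul_inv_rev, mul_assoc] using hab) x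

/-- The orbit `xS = {x·s : s ∈ S}` of a point `x ∈ Γ\\G` under a subset `S ⊆ G`. -/
def orb (x : XΓ Γ) (S : Set PSL2C) : Set (XΓ Γ) := (fun s => act Γ x s) '' S

/-- `Γ` is a lattice in `G`: there is a nonzero finite Borel measure on `Γ\\G`
invariant under the right translation action of `G`. -/
def IsLattice : Prop :=
  letI : MeasurableSpace (XΓ Γ) := borel _
  ∃ μ : MeasureTheory.Measure (XΓ Γ), μ ≠ 0 ∧ MeasureTheory.IsFiniteMeasure μ ∧
    ∀ g : PSL2C, MeasureTheory.Measure.map (fun x => act Γ x g) μ = μ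


abbrev M2 := Matrix (Fin 2) (Fin 2) ℂ

instance instTG : IsTopologicalGroup SL2C := Matrix.SpecialLinearGroup.topologicalGroup

lemma isClosedEmbedding_coe : Topology.IsClosedEmbedding (fun g : SL2C => (g.1 : M2)) :=
  Matrix.SpecialLinearGroup.isClosedEmbedding_val

instance instT2 : T2Space SL2C := isClosedEmbedding_coe.isEmbedding.t2Space
instance instLC : LocallyCompactSpace SL2C := by
  have : LocallyCompactSpace M2 := inferInstanceAs (LocallyCompactSpace (Fin 2 → Fin 2 → ℂ))
  exact isClosedEmbedding_coe.locallyCompactSpace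
instance instSC : SecondCountableTopology SL2C := by
  have : SecondCountableTopology M2 :=
    inferInstanceAs (SecondCountableTopology (Fin 2 → Fin 2 → ℂ))
  exact isClosedEmbedding_coe.isEmbedding.secondCountableTopology

lemma continuous_coe : Continuous (fun g : SL2C => (g.1 : M2)) := isClosedEmbedding_coe.continuous

/-- entrywise `ℓ¹` norm -/
def nrm (A : M2) : ℝ := ‖A 0 0‖ + ‖A 0 1‖ + ‖A 1 0‖ + ‖A 1 1‖

lemma nrm_nonneg (A : M2) : 0 ≤ nrm A := by unfold nrm; positivity

lemma nrm_one : nrm 1 = 2 := by norm_num [nrm]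

lemma nrm_add (A B : M2) : nrm (A + B) ≤ nrm A + nrm B := by
  have h := fun i j => norm_add_le (A i j) (B i j)
  have h1 := h 0 0; have h2 := h 0 1; have h3 := h 1 0; have h4 := h 1 1
  simp only [nrm, Matrix.add_apply]; linarith

lemma nrm_sub (A B : M2) : nrm (A - B) ≤ nrm A + nrm B := by
  have h := fun i j => norm_sub_le (A i j) (B i j)
  have h1 := h 0 0; have h2 := h 0 1; have h3 := h 1 0; have h4 := h 1 1
  simp only [nrm, Matrix.sub_apply]; linarith

lemma nrm_mul (A B : M2) : nrm (A * B) ≤ nrm A * nrm B := by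
  have h := fun i j => norm_add_le (A i 0 * B 0 j) (A i 1 * B 1 j)
  have h1 := h 0 0; have h2 := h 0 1; have h3 := h 1 0; have h4 := h 1 1
  simp only [norm_mul] at h1 h2 h3 h4
  simp only [nrm, Matrix.mul_apply, Fin.sum_univ_two]
  have p := fun i j k l => mul_nonneg (norm_nonneg (A i j)) (norm_nonneg (B k l))
  have := p 0 0 1 0; have := p 0 0 1 1; have := p 0 1 0 0; have := p 0 1 0 1
  have := p 1 0 1 0; have := p 1 0 1 1; have := p 1 1 0 0; have := p 1 1 0 1
  nlinarith

lemma nrm_entry (A : M2) (i j : Fin 2) : ‖A i j‖ ≤ nrm A := by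
  have h := fun i j => norm_nonneg (A i j)
  have h1 := h 0 0; have h2 := h 0 1; have h3 := h 1 0; have h4 := h 1 1
  fin_cases i <;> fin_cases j <;> simp [nrm] <;> linarith

lemma continuous_nrm : Continuous nrm := by unfold nrm; fun_prop

lemma nrm_eq_zero {A : M2} (h : nrm A = 0) : A = 0 := by
  ext i j
  have := nrm_entry A i j
  rw [h] at this
  simpa using this

lemma det_eq (g : SL2C) : g.1 0 0 * g.1 1 1 - g.1 0 1 * g.1 1 0 = 1 := by
  rw [← Matrix.det_fin_two]; exact g.2

lemma nrm_inv (g : SL2C) : nrm (g⁻¹).1 = nrm g.1 := by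
  rw [Matrix.SpecialLinearGroup.SL2_inv_expl]
  simp [nrm]; ring

lemma nrm_mul' (g h : SL2C) : nrm (g * h).1 ≤ nrm g.1 * nrm h.1 := nrm_mul _ _

lemma SL_ext {g h : SL2C} (h1 : g.1 0 0 = h.1 0 0) (h2 : g.1 0 1 = h.1 0 1)
    (h3 : g.1 1 0 = h.1 1 0) (h4 : g.1 1 1 = h.1 1 1) : g = h := by
  apply Subtype.ext
  ext i j; fin_cases i <;> fin_cases j <;> assumption

lemma mul_entries (g h : SL2C) (i j : Fin 2) :
    (g * h).1 i j = g.1 i 0 * h.1 0 j + g.1 i 1 * h.1 1 j := by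
  change (g.1 * h.1) i j = _
  simp [Matrix.mul_apply, Fin.sum_univ_two]

lemma comm_iff (p q : SL2C) : p * q = q * p ↔
    (p.1 0 1 * q.1 1 0 = p.1 1 0 * q.1 0 1 ∧
     (p.1 0 0 - p.1 1 1) * q.1 0 1 = p.1 0 1 * (q.1 0 0 - q.1 1 1) ∧
     (p.1 0 0 - p.1 1 1) * q.1 1 0 = p.1 1 0 * (q.1 0 0 - q.1 1 1)) := by
  constructor
  · intro h
    have e := fun i j => congrArg (fun x : SL2C => x.1 i j) h
    simp only [mul_entries] at e
    have e1 := e 0 0; have e2 := e 0 1; have e3 := e 1 0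
    refine ⟨by linear_combination e1, by linear_combination e2, by linear_combination -e3⟩
  · rintro ⟨e1, e2, e3⟩
    apply SL_ext <;> simp only [mul_entries]
    · linear_combination e1
    · linear_combination e2
    · linear_combination -e3
    · linear_combination -e1

lemma central_of (p : SL2C) (h1 : p.1 0 1 = 0) (h2 : p.1 1 0 = 0) (h3 : p.1 0 0 = p.1 1 1) :
    p = 1 ∨ p = -1 := by
  have hd := det_eq p
  rw [h1, h3] at hd
  have : (p.1 1 1 - 1) * (p.1 1 1 + 1) = 0 := by linear_combination hd
  rcases mul_eq_zero.1 this with h | h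
  · left
    have h4 : p.1 1 1 = 1 := by linear_combination h
    apply SL_ext <;> simp [h1, h2, h3, h4]
  · right
    have h4 : p.1 1 1 = -1 := by linear_combination h
    apply SL_ext <;> simp [h1, h2, h3, h4]

/-- commuting is transitive on noncentral elements -/
lemma comm_trans {s p q : SL2C} (hs : s ≠ 1) (hs' : s ≠ -1) (hp : s * p = p * s)
    (hq : s * q = q * s) : p * q = q * p := by
  rw [comm_iff] at hp hq ⊢
  obtain ⟨p1, p2, p3⟩ := hp
  obtain ⟨q1, q2, q3⟩ := hq
  set b := s.1 0 1
  set c := s.1 1 0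
  set e := s.1 0 0 - s.1 1 1 with he
  have key : ∀ x y z x' y' z' : ℂ, b * y = c * x → e * x = b * z → e * y = c * z →
      b * y' = c * x' → e * x' = b * z' → e * y' = c * z' →
      x * y' = y * x' ∧ z * x' = x * z' ∧ z * y' = y * z' := by
    intro x y z x' y' z' a1 a2 a3 b1 b2 b3
    by_cases hb : b = 0
    · by_cases hc : c = 0
      · by_cases h0 : e = 0
        · exfalso
          rcases central_of s hb hc (by linear_combination h0) with h | h
          · exact hs h
          · exact hs' h
        · have hx : x = 0 := by simpa [hb, h0] using a2
          have hy : y = 0 := by simpa [hc, h0] using a3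
          have hx' : x' = 0 := by simpa [hb, h0] using b2
          have hy' : y' = 0 := by simpa [hc, h0] using b3
          simp [hx, hy, hx', hy']
      · refine ⟨?_, ?_, ?_⟩ <;> apply mul_left_cancel₀ hc
        · linear_combination -y' * a1 + y * b1
        · have hx : x = 0 := by simpa [hb, hc] using a1.symm
          have hx' : x' = 0 := by simpa [hb, hc] using b1.symm
          simp [hx, hx']
        · linear_combination -y' * a3 + y * b3
    · refine ⟨?_, ?_, ?_⟩ <;> apply mul_left_cancel₀ hb
      · linear_combination  x * b1 - x' * a1
      · linear_combination - x' * a2 + x * b2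
      · have : y = c * x / b := by field_simp; linear_combination a1
        have : y' = c * x' / b := by field_simp; linear_combination b1
        subst y y'; field_simp
        apply mul_left_cancel₀ hb
        linear_combination - c * x' * a2 + c * x * b2
  exact key _ _ _ _ _ _ p1 p2 p3 q1 q2 q3

/-- local finiteness of a subgroup -/
def LF (Γ : Subgroup SL2C) : Prop := ∀ R : ℝ, {γ : SL2C | γ ∈ Γ ∧ nrm γ.1 ≤ R}.Finite

lemma nrm_neg_one : nrm ((-1 : SL2C).1 - 1) = 4 := by
  simp [nrm]; norm_num

lemma nrm_le_of_small {p : SL2C} {e : ℝ} (h : nrm (p.1 - 1) < e) : nrm p.1 ≤ 2 + e := by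
  have := nrm_add (p.1 - 1) 1
  rw [sub_add_cancel, nrm_one] at this
  linarith

lemma nrm_commutator (p q : SL2C) : nrm ((p * q * p⁻¹ * q⁻¹).1 - 1) ≤
    2 * nrm (p.1 - 1) * nrm (q.1 - 1) * (nrm p.1 * nrm q.1) := by
  have e : (p * q * p⁻¹ * q⁻¹).1 - 1 =
      ((p.1 - 1) * (q.1 - 1) - (q.1 - 1) * (p.1 - 1)) * ((p⁻¹).1 * (q⁻¹).1) := by
    have h1 : (p.1 - 1) * (q.1 - 1) - (q.1 - 1) * (p.1 - 1) = p.1 * q.1 - q.1 * p.1 := by noncomm_ring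
    have h2 : (q * p * p⁻¹ * q⁻¹).1 = 1 := by simp [mul_assoc]
    rw [h1, ← h2]
    change p.1 * q.1 * (p⁻¹).1 * (q⁻¹).1 - q.1 * p.1 * (p⁻¹).1 * (q⁻¹).1 = _
    noncomm_ring
  rw [e]
  refine (nrm_mul _ _).trans ?_
  have h1 := nrm_sub ((p.1 - 1) * (q.1 - 1)) ((q.1 - 1) * (p.1 - 1))
  have h2 := nrm_mul (p.1 - 1) (q.1 - 1)
  have h3 := nrm_mul (q.1 - 1) (p.1 - 1)
  have h4 := nrm_mul (p⁻¹).1 (q⁻¹).1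
  rw [nrm_inv, nrm_inv] at h4
  apply mul_le_mul _ h4 (nrm_nonneg _)
  · have := mul_nonneg (nrm_nonneg (p.1 - 1)) (nrm_nonneg (q.1 - 1)); linarith
  · linarith

/-- Zassenhaus for `SL(2,ℂ)` -/
lemma small_commute {Γ : Subgroup SL2C} (hΓ : LF Γ) {p q : SL2C} (hp : p ∈ Γ) (hq : q ∈ Γ)
    (hp' : nrm (p.1 - 1) < 1/20) (hq' : nrm (q.1 - 1) < 1/20) : p * q = q * p := by
  by_contra hne
  set F : Set SL2C := {γ : SL2C | γ ∈ Γ ∧ nrm γ.1 ≤ 3} with hF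
  have hFf : F.Finite := hΓ 3
  set P : Set (SL2C × SL2C) := {x | x.1 ∈ Γ ∧ x.2 ∈ Γ ∧ nrm (x.1.1 - 1) < 1/20 ∧
    nrm (x.2.1 - 1) < 1/20 ∧ x.1 * x.2 ≠ x.2 * x.1} with hP
  have hPf : P.Finite := by
    apply (hFf.prod hFf).subset
    rintro ⟨a, b⟩ ⟨h1, h2, h3, h4, -⟩
    have := nrm_le_of_small h3
    have := nrm_le_of_small h4
    exact ⟨⟨h1, by linarith⟩, ⟨h2, by linarith⟩⟩
  have hPn : P.Nonempty := ⟨(p, q), hp, hq, hp', hq', hne⟩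
  obtain ⟨⟨a, b⟩, ⟨h1, h2, h3, h4, h5⟩, hmin⟩ :=
    Set.exists_min_image P (fun x => nrm (x.1.1 - 1) + nrm (x.2.1 - 1)) hPf hPn
  dsimp only at h1 h2 h3 h4 h5 hmin
  set s := a * b * a⁻¹ * b⁻¹ with hs
  have hsΓ : s ∈ Γ := Γ.mul_mem (Γ.mul_mem (Γ.mul_mem h1 h2) (Γ.inv_mem h1)) (Γ.inv_mem h2)
  have hb1 := nrm_le_of_small h3
  have hb2 := nrm_le_of_small h4
  have hab : nrm a.1 * nrm b.1 ≤ 2.05 * 2.05 :=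
    mul_le_mul (by linarith) (by linarith) (nrm_nonneg _) (by norm_num)
  have hsn := nrm_commutator a b
  rw [← hs] at hsn
  have a0 := nrm_nonneg (a.1 - 1)
  have b0 := nrm_nonneg (b.1 - 1)
  have ab0 := mul_nonneg a0 b0
  have hsn2 : nrm (s.1 - 1) ≤ 9 * (nrm (a.1 - 1) * nrm (b.1 - 1)) := by nlinarith
  have apos : 0 < nrm (a.1 - 1) := by
    rcases a0.lt_or_eq with h | h
    · exact h
    · exfalso; apply h5
      have := sub_eq_zero.1 (nrm_eq_zero h.symm)
      have : a = 1 := Subtype.ext this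
      simp [this]
  have bpos : 0 < nrm (b.1 - 1) := by
    rcases b0.lt_or_eq with h | h
    · exact h
    · exfalso; apply h5
      have := sub_eq_zero.1 (nrm_eq_zero h.symm)
      have : b = 1 := Subtype.ext this
      simp [this]
  have sa : nrm (s.1 - 1) < nrm (a.1 - 1) := by nlinarith
  have sb : nrm (s.1 - 1) < nrm (b.1 - 1) := by nlinarith
  have c1 : s * a = a * s := by
    by_contra h
    have := hmin (s, a) ⟨hsΓ, h1, by linarith, h3, h⟩
    dsimp only at this; linarith
  have c2 : s * b = b * s := by
    by_contra h
    have := hmin (s, b) ⟨hsΓ, h2, by linarith, h4, h⟩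
    dsimp only at this; linarith
  apply h5
  by_cases s1 : s = 1
  · have : a * b = s * (b * a) := by rw [hs]; group
    rw [this, s1, one_mul]
  · refine comm_trans s1 ?_ c1 c2
    intro h
    rw [h, nrm_neg_one] at sa
    linarith

lemma uMat_mul (s t : ℂ) : uMat s * uMat t = uMat (s + t) := by
  apply SL_ext <;> simp only [mul_entries] <;> simp [uMat]; ring

lemma uMat_zero : uMat 0 = 1 := by
  apply SL_ext <;> simp [uMat]

lemma uMat_inv (t : ℂ) : (uMat t)⁻¹ = uMat (-t) := by
  rw [inv_eq_iff_mul_eq_one, uMat_mul]; simp [uMat_zero]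

/-- conjugate subgroup `g⁻¹ Γ g` -/
def cj (Γ : Subgroup SL2C) (g : SL2C) : Subgroup SL2C := Γ.comap (MulAut.conj g).toMonoidHom

lemma mem_cj {Γ : Subgroup SL2C} {g p : SL2C} : p ∈ cj Γ g ↔ g * p * g⁻¹ ∈ Γ := Iff.rfl

lemma LF_cj {Γ : Subgroup SL2C} (h : LF Γ) (g : SL2C) : LF (cj Γ g) := by
  intro R
  have hf := h (nrm g.1 * R * nrm g.1)
  refine (hf.image (fun γ => g⁻¹ * γ * g)).subset ?_
  rintro p ⟨hp, hpR⟩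
  refine ⟨g * p * g⁻¹, ⟨hp, ?_⟩, by group⟩
  have h1 := nrm_mul' (g * p) g⁻¹
  have h2 := nrm_mul' g p
  rw [nrm_inv] at h1
  refine h1.trans ?_
  gcongr
  · exact nrm_nonneg _
  · refine h2.trans ?_
    gcongr
    exact nrm_nonneg _

lemma LF_countable {Γ : Subgroup SL2C} (h : LF Γ) : (Γ : Set SL2C).Countable := by
  have : (Γ : Set SL2C) = ⋃ n : ℕ, {γ : SL2C | γ ∈ Γ ∧ nrm γ.1 ≤ n} := by
    ext γ
    simp only [SetLike.mem_coe, Set.mem_iUnion, Set.mem_ofPred_eq]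
    constructor
    · intro hg
      obtain ⟨n, hn⟩ := exists_nat_ge (nrm γ.1)
      exact ⟨n, hg, hn⟩
    · rintro ⟨n, hg, -⟩; exact hg
  rw [this]
  exact Set.countable_iUnion fun n => (h n).countable

/-- conjugation by the horocycle flow -/
def fl (t : ℝ) (p : SL2C) : SL2C := uMat (-t) * p * uMat t

lemma fl_entries (t : ℝ) (p : SL2C) :
    (fl t p).1 0 0 = p.1 0 0 - t * p.1 1 0 ∧
    (fl t p).1 0 1 = p.1 0 1 + t * (p.1 0 0 - p.1 1 1) - t ^ 2 * p.1 1 0 ∧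
    (fl t p).1 1 0 = p.1 1 0 ∧ (fl t p).1 1 1 = p.1 1 1 + t * p.1 1 0 := by
  refine ⟨?_, ?_, ?_, ?_⟩ <;> simp only [fl, mul_entries] <;> simp [uMat] <;> ring

lemma continuous_fl (p : SL2C) : Continuous (fun t => nrm ((fl t p).1 - 1)) := by
  have h := fun t => fl_entries t p
  have : (fun t => nrm ((fl t p).1 - 1)) = fun t : ℝ => ‖p.1 0 0 - t * p.1 1 0 - 1‖ +
    ‖p.1 0 1 + t * (p.1 0 0 - p.1 1 1) - t ^ 2 * p.1 1 0‖ + ‖p.1 1 0‖ +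
    ‖p.1 1 1 + t * p.1 1 0 - 1‖ := by
    funext t
    obtain ⟨h1, h2, h3, h4⟩ := h t
    simp [nrm, h1, h2, h3, h4]
  rw [this]
  fun_prop

lemma fl_eq_conj (t : ℝ) (p : SL2C) : fl t p = (uMat t)⁻¹ * p * uMat t := by
  rw [uMat_inv]; rfl

lemma fl_mem {Γ : Subgroup SL2C} {p : SL2C} (hp : p ∈ Γ) (t : ℝ) : fl t p ∈ cj Γ (uMat t) := by
  rw [mem_cj, fl_eq_conj]
  convert hp using 1
  group

lemma fl_commute {t : ℝ} {p q : SL2C} (h : fl t p * fl t q = fl t q * fl t p) : p * q = q * p := by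
  rw [fl_eq_conj, fl_eq_conj] at h
  have h' : (uMat t)⁻¹ * (p * q) * uMat t = (uMat t)⁻¹ * (q * p) * uMat t := by
    calc _ = _ := by group
      _ = _ := h
      _ = _ := by group
  simpa using h'

lemma fl_neg_one (t : ℝ) : fl t (-1) = -1 := by
  rw [fl_eq_conj]; simp

/-- nondivergence: if no noncentral element fixes `∞`, thick times are unbounded -/
lemma thick_times {Γ : Subgroup SL2C} (hΓ : LF Γ)
    (hgood : ∀ M ∈ Γ, M.1 1 0 = 0 → M = 1 ∨ M = -1) (T : ℝ) :
    ∃ t ≥ T, ∀ p ∈ Γ, nrm ((fl t p).1 - 1) < 1/20 → p = 1 := by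
  by_contra hcon
  push Not at hcon
  have hcomm : ∀ t p q, p ∈ Γ → q ∈ Γ → nrm ((fl t p).1 - 1) < 1/20 →
      nrm ((fl t q).1 - 1) < 1/20 → p * q = q * p := by
    intro t p q hp hq h1 h2
    exact fl_commute (small_commute (LF_cj hΓ (uMat t)) (fl_mem hp t) (fl_mem hq t) h1 h2)
  have hneg : ∀ t p, nrm ((fl t p).1 - 1) < 1/20 → p ≠ -1 := by
    rintro t p h rfl
    rw [fl_neg_one, nrm_neg_one] at h
    norm_num at h
  obtain ⟨p0, hp0, hp0s, hp01⟩ := hcon T le_rfl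
  have hp0' := hneg _ _ hp0s
  set u : Set ℝ := {t | ∃ p ∈ Γ, p ≠ 1 ∧ nrm ((fl t p).1 - 1) < 1/20 ∧ p0 * p = p * p0}
  set v : Set ℝ := {t | ∃ p ∈ Γ, p ≠ 1 ∧ nrm ((fl t p).1 - 1) < 1/20 ∧ p0 * p ≠ p * p0}
  have hu : IsOpen u := by
    have : u = ⋃ p ∈ {p | p ∈ Γ ∧ p ≠ 1 ∧ p0 * p = p * p0},
        {t | nrm ((fl t p).1 - 1) < 1/20} := by
      ext t; simp [u]; grind
    rw [this]
    exact isOpen_biUnion fun p _ => isOpen_lt (continuous_fl p) continuous_const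
  have hv : IsOpen v := by
    have : v = ⋃ p ∈ {p | p ∈ Γ ∧ p ≠ 1 ∧ p0 * p ≠ p * p0},
        {t | nrm ((fl t p).1 - 1) < 1/20} := by
      ext t; simp [v]; grind
    rw [this]
    exact isOpen_biUnion fun p _ => isOpen_lt (continuous_fl p) continuous_const
  have hcov : Set.Ici T ⊆ u ∪ v := by
    intro t ht
    obtain ⟨p, hp, hps, hp1⟩ := hcon t ht
    by_cases h : p0 * p = p * p0
    · exact Or.inl ⟨p, hp, hp1, hps, h⟩
    · exact Or.inr ⟨p, hp, hp1, hps, h⟩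
  have hall : ∀ t ≥ T, t ∈ u := by
    intro t ht
    by_contra htu
    have htv : t ∈ v := (hcov ht).resolve_left htu
    obtain ⟨r, hr, ⟨p, hp, hp1, hps, hpc⟩, ⟨q, hq, hq1, hqs, hqc⟩⟩ :=
      isPreconnected_Ici (a := T) u v hu hv hcov
        ⟨T, Set.mem_Ici.2 le_rfl, p0, hp0, hp01, hp0s, rfl⟩ ⟨t, ht, htv⟩
    exact hqc (comm_trans hp1 (hneg _ _ hps) hpc.symm (hcomm r p q hp hq hps hqs))
  set a := p0.1 0 0
  set b := p0.1 0 1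
  set c := p0.1 1 0 with hc
  set d := p0.1 1 1
  have hc0 : c ≠ 0 := fun h => (hgood p0 hp0 h).elim hp01 hp0'
  set R : ℝ := 10 + ‖b‖ / ‖c‖
  have hcp : 0 < ‖c‖ := norm_pos_iff.2 hc0
  -- finite set and lower bound
  obtain ⟨η, hη, hηF⟩ : ∃ η > 0, ∀ γ ∈ {γ : SL2C | γ ∈ Γ ∧ nrm γ.1 ≤ R},
      γ.1 1 0 ≠ 0 → η ≤ ‖γ.1 1 0‖ := by
    set F := {γ : SL2C | γ ∈ Γ ∧ nrm γ.1 ≤ R} ∩ {γ | γ.1 1 0 ≠ 0} with hF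
    have hFf : F.Finite := (hΓ R).inter_of_left _
    by_cases hFn : F.Nonempty
    · obtain ⟨x, hx, hxm⟩ := Set.exists_min_image F (fun γ => ‖γ.1 1 0‖) hFf hFn
      exact ⟨‖x.1 1 0‖, norm_pos_iff.2 hx.2, fun γ h1 h2 => hxm γ ⟨h1, h2⟩⟩
    · refine ⟨1, one_pos, fun γ h1 h2 => ?_⟩
      exact absurd ⟨γ, h1, h2⟩ hFn
  -- choose t large
  obtain ⟨t, ht1, htT, ht2, ht3⟩ : ∃ t : ℝ, 1 ≤ t ∧ T ≤ t ∧
      2 * (‖a - d‖ + ‖b‖) ≤ t * ‖c‖ ∧ 1 < t * η := by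
    refine ⟨max 1 (max T (max (2 * (‖a - d‖ + ‖b‖) / ‖c‖) (2 / η))), by simp, by simp, ?_, ?_⟩
    · rw [← div_le_iff₀ hcp]; simp
    · refine lt_of_lt_of_le (b := 2) (by norm_num) ?_
      rw [← div_le_iff₀ hη]; simp
  obtain ⟨p, hp, hp1, hps, hpc⟩ := hall t htT
  have hpn := hneg _ _ hps
  have hc'0 : p.1 1 0 ≠ 0 := fun h => (hgood p hp h).elim hp1 hpn
  obtain ⟨e1, e2, e3, e4⟩ := fl_entries t p
  have f1 := nrm_entry ((fl t p).1 - 1) 0 0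
  have f2 := nrm_entry ((fl t p).1 - 1) 0 1
  have f3 := nrm_entry ((fl t p).1 - 1) 1 0
  have f4 := nrm_entry ((fl t p).1 - 1) 1 1
  simp [e1, e2, e3, e4] at f1 f2 f3 f4
  rw [comm_iff] at hpc
  obtain ⟨c1, c2, c3⟩ := hpc
  change b * p.1 1 0 = c * p.1 0 1 at c1
  change (a - d) * p.1 1 0 = c * (p.1 0 0 - p.1 1 1) at c3
  set c' := p.1 1 0
  set a' := p.1 0 0
  set b' := p.1 0 1
  set d' := p.1 1 1
  have k1 : c * (b' + t * (a' - d') - t ^ 2 * c') = - (c' * (t ^ 2 * c - (t * (a - d) + b))) := by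
    linear_combination -c1 - t * c3
  have k2 : ‖c'‖ * ‖(t ^ 2 * c - (t * (a - d) + b) : ℂ)‖ ≤ ‖c‖ * (1/20) := by
    rw [← norm_mul, ← norm_neg, ← k1, norm_mul]
    gcongr
    linarith
  have k3 : t ^ 2 * ‖c‖ / 2 ≤ ‖(t ^ 2 * c - (t * (a - d) + b) : ℂ)‖ := by
    have g1 := norm_sub_norm_le ((t : ℂ) ^ 2 * c) (t * (a - d) + b)
    have g2 := norm_add_le ((t : ℂ) * (a - d)) b
    have g3 : ‖(t : ℂ)‖ = t := by simp; linarith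
    rw [norm_mul, norm_pow, g3] at g1
    rw [norm_mul, g3] at g2
    have := norm_nonneg b
    nlinarith
  have k4 : ‖c'‖ * t ^ 2 ≤ 1/10 := by
    have : ‖c'‖ * (t ^ 2 * ‖c‖ / 2) ≤ ‖c‖ * (1/20) :=
      (mul_le_mul_of_nonneg_left k3 (norm_nonneg _)).trans k2
    nlinarith
  have k5 : ‖c'‖ * t ≤ 1/10 := by
    refine le_trans ?_ k4
    gcongr
    nlinarith
  have ktc : ‖(t : ℂ) * c'‖ ≤ 1/10 := by
    rw [norm_mul]; simp; rw [abs_of_nonneg (by linarith)]; linarith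
  have hpR : nrm p.1 ≤ R := by
    have g1 : ‖a'‖ ≤ 2 := by
      have := norm_add_le (a' - t * c' - 1) (t * c' + 1)
      have h2 := norm_add_le (t * c') 1
      have : a' - t * c' - 1 + (t * c' + 1) = a' := by ring
      simp_all
      linarith
    have g4 : ‖d'‖ ≤ 2 := by
      have := norm_sub_le (d' + t * c' - 1) (t * c' - 1)
      have h2 := norm_sub_le (t * c') 1
      have : d' + t * c' - 1 - (t * c' - 1) = d' := by ring
      simp_all
      linarith
    have g2 : ‖b'‖ ≤ ‖b‖ / ‖c‖ := by
      rw [le_div_iff₀ hcp, ← norm_mul, mul_comm, ← c1, norm_mul]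
      have : ‖c'‖ ≤ 1 := by linarith
      have := norm_nonneg b
      nlinarith
    change ‖a'‖ + ‖b'‖ + ‖c'‖ + ‖d'‖ ≤ 10 + ‖b‖ / ‖c‖
    linarith
  have := hηF p ⟨hp, hpR⟩ hc'0
  change η ≤ ‖c'‖ at this
  nlinarith

open Topology in
lemma isCompact_nrm_le (R : ℝ) : IsCompact {g : SL2C | nrm g.1 ≤ R} := by
  have h1 : IsCompact {A : M2 | nrm A ≤ R} := by
    have h2 : IsCompact (Set.univ.pi fun _ : Fin 2 => Set.univ.pi fun _ : Fin 2 =>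
        Metric.closedBall (0 : ℂ) R) :=
      isCompact_univ_pi fun _ => isCompact_univ_pi fun _ => isCompact_closedBall _ _
    refine IsCompact.of_isClosed_subset (X := M2) h2 (isClosed_le continuous_nrm continuous_const) ?_
    intro A hA i _ j _
    simpa using (nrm_entry A i j).trans hA
  exact isClosedEmbedding_coe.isCompact_preimage h1

/-- preimage of `Γ` in `SL(2,ℂ)` -/
def lft (Γ : Subgroup PSL2C) : Subgroup SL2C := Γ.comap pr

lemma pr_eq_one {g : SL2C} (h : pr g = 1) : g = 1 ∨ g = -1 := by
  have h1 : g ∈ Subgroup.center SL2C := (QuotientGroup.eq_one_iff g).1 h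
  rw [Subgroup.mem_center_iff] at h1
  have h2 := (comm_iff _ _).1 (h1 (uMat 1))
  obtain ⟨e1, e2, e3⟩ := h2
  set l : SL2C := ⟨!![1, 0; 1, 1], by simp [Matrix.det_fin_two_of]⟩
  have h3 := (comm_iff _ _).1 (h1 l)
  obtain ⟨f1, f2, f3⟩ := h3
  simp [uMat, l] at e1 e2 e3 f1 f2 f3
  exact central_of g f1.symm e1 (by linear_combination -e2)

lemma continuous_pr : Continuous pr := continuous_quot_mk

lemma LF_lft (Γ : Subgroup PSL2C) (hdisc : DiscreteTopology Γ) : LF (lft Γ) := by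
  have hd : DiscreteTopology (lft Γ) := by
    obtain ⟨O, hO, hO1⟩ : ∃ O : Set PSL2C, IsOpen O ∧ Subtype.val ⁻¹' O = ({1} : Set Γ) :=
      isOpen_induced_iff.1 (isOpen_discrete ({1} : Set Γ))
    apply discreteTopology_of_isOpen_singleton_one
    refine isOpen_induced_iff.2 ⟨pr ⁻¹' O ∩ {-1}ᶜ,
      (hO.preimage continuous_pr).inter isClosed_singleton.isOpen_compl, ?_⟩
    ext ⟨x, hx⟩
    have h1 : (⟨1, Γ.one_mem⟩ : Γ) ∈ (Subtype.val ⁻¹' O : Set Γ) := by rw [hO1]; rfl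
    simp only [Set.mem_preimage, Set.mem_inter_iff, Set.mem_compl_iff, Set.mem_singleton_iff]
    constructor
    · rintro ⟨h, hne⟩
      have h2 : (⟨pr x, hx⟩ : Γ) ∈ (Subtype.val ⁻¹' O : Set Γ) := h
      rw [hO1] at h2
      have h3 : pr x = 1 := congrArg Subtype.val h2
      apply Subtype.ext
      exact (pr_eq_one h3).resolve_right hne
    · intro h
      have h3 : x = 1 := congrArg Subtype.val h
      subst h3
      refine ⟨by simpa using h1, ?_⟩
      intro h4
      have := nrm_neg_one
      rw [← h4] at this
      simp [nrm] at this
  intro R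
  have ht := (lft Γ).tendsto_coe_cofinite_of_discrete ⟨hd⟩
  have h2 := ht (isCompact_nrm_le R).compl_mem_cocompact
  rw [mem_map, mem_cofinite] at h2
  refine (h2.image Subtype.val).subset ?_
  rintro γ ⟨h3, h4⟩
  exact ⟨⟨γ, h3⟩, by simpa using h4, rfl⟩

/-- real matrices in `SL(2,ℂ)` -/
def Hr : Subgroup SL2C := (Matrix.SpecialLinearGroup.map (n := Fin 2) (algebraMap ℝ ℂ)).range

lemma mem_Hr {g : SL2C} : g ∈ Hr ↔ ∀ i j, (g.1 i j).im = 0 := by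
  constructor
  · rintro ⟨h, rfl⟩ i j
    simp
  · intro h
    refine ⟨⟨g.1.map Complex.re, ?_⟩, ?_⟩
    · have h1 := congrArg Complex.re (det_eq g)
      simp [h] at h1
      simp [Matrix.det_fin_two]; linarith
    · have key : ∀ i j, ((g.1 i j).re : ℂ) = g.1 i j := fun i j => Complex.ext rfl (h i j).symm
      exact SL_ext (key 0 0) (key 0 1) (key 1 0) (key 1 1)

lemma isClosed_Hr : IsClosed (Hr : Set SL2C) := by
  have : (Hr : Set SL2C) = ⋂ i, ⋂ j, {g | (g.1 i j).im = 0} := by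
    ext g; simp [mem_Hr]
  rw [this]
  refine isClosed_iInter fun i => isClosed_iInter fun j => isClosed_eq ?_ continuous_const
  have := continuous_coe
  exact Complex.continuous_im.comp ((continuous_apply_apply i j).comp this)

lemma uMat_mem_Hr (t : ℝ) : uMat t ∈ Hr := by
  rw [mem_Hr]; intro i j; fin_cases i <;> fin_cases j <;> simp [uMat]

/-- `Γ g H` in `SL(2,ℂ)` -/
def SS (Γ : Subgroup SL2C) (g : SL2C) : Set SL2C := {k | ∃ γ ∈ Γ, ∃ h ∈ Hr, k = γ * g * h}

lemma locally_H {Γ : Subgroup SL2C} (hΓ : LF Γ) {g : SL2C} (hS : IsClosed (SS Γ g)) {k : SL2C}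
    (hk : k ∈ SS Γ g) : ∃ O : Set SL2C, IsOpen O ∧ k ∈ O ∧ ∀ x ∈ O, x ∈ SS Γ g → k⁻¹ * x ∈ Hr := by
  have hlc : LocallyCompactSpace (SS Γ g) := hS.isClosedEmbedding_subtypeVal.locallyCompactSpace
  have hne : Nonempty (SS Γ g) := ⟨⟨k, hk⟩⟩
  have hcount : Countable Γ := (LF_countable hΓ).to_subtype
  set f : Γ → Set (SS Γ g) := fun γ => {x | (γ.1 * g)⁻¹ * x.1 ∈ Hr}
  have hf : ∀ γ, IsClosed (f γ) := fun γ =>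
    isClosed_Hr.preimage (continuous_const.mul continuous_subtype_val)
  have hU : ⋃ γ, f γ = Set.univ := by
    rw [Set.eq_univ_iff_forall]
    rintro ⟨x, γ, hγ, h, hh, rfl⟩
    refine Set.mem_iUnion.2 ⟨⟨γ, hγ⟩, ?_⟩
    change (γ * g)⁻¹ * (γ * g * h) ∈ Hr
    rw [inv_mul_cancel_left]; exact hh
  obtain ⟨γ, ⟨x, hx⟩, hxi⟩ := nonempty_interior_of_iUnion_of_closed hf hU
  obtain ⟨γ1, hγ1, h1, hh1, hx1⟩ := hx
  obtain ⟨γ2, hγ2, h2, hh2, hk2⟩ := hk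
  rw [mem_interior] at hxi
  obtain ⟨V, hVf, hV, hxV⟩ := hxi
  obtain ⟨O, hO, rfl⟩ := isOpen_induced_iff.1 hV
  -- translate: k = γ2 γ1⁻¹ x h1⁻¹ h2
  have hcont : Continuous (fun y : SL2C => γ1 * γ2⁻¹ * y * (h2⁻¹ * h1)) :=
    (continuous_const.mul continuous_id).mul continuous_const
  have hkx : γ1 * γ2⁻¹ * k * (h2⁻¹ * h1) = x := by rw [hk2, hx1]; group
  refine ⟨_, hO.preimage hcont, ?_, ?_⟩
  · change γ1 * γ2⁻¹ * k * (h2⁻¹ * h1) ∈ O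
    rw [hkx]; exact hxV
  · intro y hy hyS
    have hyS' : γ1 * γ2⁻¹ * y * (h2⁻¹ * h1) ∈ SS Γ g := by
      obtain ⟨γ3, hγ3, h3, hh3, rfl⟩ := hyS
      refine ⟨γ1 * γ2⁻¹ * γ3, Γ.mul_mem (Γ.mul_mem hγ1 (Γ.inv_mem hγ2)) hγ3,
        h3 * (h2⁻¹ * h1), Hr.mul_mem hh3 (Hr.mul_mem (Hr.inv_mem hh2) hh1), by group⟩
    have m1 : (γ.1 * g)⁻¹ * (γ1 * γ2⁻¹ * y * (h2⁻¹ * h1)) ∈ Hr :=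
      @hVf ⟨_, hyS'⟩ hy
    have m2 : (γ.1 * g)⁻¹ * x ∈ Hr := @hVf ⟨x, _⟩ hxV
    rw [← hkx] at m2
    have h12 : h2⁻¹ * h1 ∈ Hr := Hr.mul_mem (Hr.inv_mem hh2) hh1
    have := Hr.mul_mem (Hr.mul_mem h12 (Hr.mul_mem (Hr.inv_mem m2) m1)) (Hr.inv_mem h12)
    convert this using 1
    group

open Topology in
lemma nonabelian {Γ : Subgroup SL2C} (hΓ : LF Γ) {g : SL2C} (hS : IsClosed (SS Γ g))
    (hgood : ∀ M ∈ cj Γ g, M.1 1 0 = 0 → M = 1 ∨ M = -1) (R : ℝ)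
    (hR : ∀ t : ℝ, (∀ p ∈ cj Γ g, nrm ((fl t p).1 - 1) < 1/20 → p = 1) →
      ∃ γ ∈ Γ, nrm (γ * (g * uMat t)).1 ≤ R) :
    ∃ d ∈ cj Γ g, ∃ d' ∈ cj Γ g, d ∈ Hr ∧ d' ∈ Hr ∧ d * d' ≠ d' * d := by
  by_contra hcon
  push Not at hcon
  have hex : ∀ n : ℕ, ∃ t : ℝ, (n : ℝ) + 1 ≤ t ∧ ∃ γ ∈ Γ, nrm (γ * (g * uMat t)).1 ≤ R := by
    intro n
    obtain ⟨t, ht, hp⟩ := thick_times (LF_cj hΓ g) hgood (n + 1)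
    exact ⟨t, ht, hR t hp⟩
  choose t ht γ hγ hb using hex
  obtain ⟨k, -, φ, hφ, hlim⟩ := (isCompact_nrm_le R).tendsto_subseq (x := fun n => γ n * (g * uMat (t n))) hb
  set K : ℕ → SL2C := fun n => γ (φ n) * (g * uMat (t (φ n))) with hK
  replace hlim : Tendsto K atTop (𝓝 k) := hlim
  have hKS : ∀ n, K n ∈ SS Γ g := fun n => ⟨γ (φ n), hγ _, uMat (t (φ n)), uMat_mem_Hr _, by
    simp [hK, mul_assoc]⟩
  have hkS : k ∈ SS Γ g := hS.mem_of_tendsto hlim (Eventually.of_forall hKS)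
  obtain ⟨O, hO, hkO, hOH⟩ := locally_H hΓ hS hkS
  obtain ⟨N, hN⟩ := eventually_atTop.1 (hlim.eventually (hO.mem_nhds hkO))
  have hKH : ∀ n ≥ N, k⁻¹ * K n ∈ Hr := fun n hn => hOH _ (hN n hn) (hKS n)
  set s : ℕ → ℝ := fun n => t (φ (n + N)) with hs
  set y : ℕ → SL2C := fun n => (K (n + N))⁻¹ * K N * uMat (- t (φ N)) with hy
  set w := k⁻¹ * K N * uMat (- t (φ N)) with hw
  have hylim : Tendsto y atTop (𝓝 w) :=
    ((((hlim.comp (tendsto_add_atTop_nat N)).inv).mul_const _).mul_const _)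
  have hslim : Tendsto s atTop atTop := by
    refine tendsto_atTop_mono (f := fun n : ℕ => (n : ℝ)) (fun n => ?_) tendsto_natCast_atTop_atTop
    have h1 := ht (φ (n + N))
    have h2 : n + N ≤ φ (n + N) := hφ.id_le _
    have h3 : ((n + N : ℕ) : ℝ) ≤ (φ (n + N) : ℝ) := by exact_mod_cast h2
    push_cast at h3
    have : (0 : ℝ) ≤ N := by positivity
    change (n : ℝ) ≤ t (φ (n + N))
    linarith
  set D : ℕ → SL2C := fun n => uMat (s n) * y n with hD
  have hDc : ∀ n, D n ∈ cj Γ g := by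
    intro n
    rw [mem_cj]
    have : g * D n * g⁻¹ = (γ (φ (n + N)))⁻¹ * γ (φ N) := by
      simp only [hD, hy, hK, hs]
      rw [← uMat_inv]
      group
    rw [this]
    exact Γ.mul_mem (Γ.inv_mem (hγ _)) (hγ _)
  have hDH : ∀ n, D n ∈ Hr := by
    intro n
    have h1 := hKH (n + N) (by omega)
    have h2 := hKH N le_rfl
    have h3 := uMat_mem_Hr (- t (φ N))
    push_cast at h3
    have := Hr.mul_mem (uMat_mem_Hr (s n)) (Hr.mul_mem (Hr.mul_mem (Hr.inv_mem h1) h2) h3)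
    convert this using 1
    simp only [hD, hy]
    group
  have hDe : ∀ n, (D n).1 0 0 = (y n).1 0 0 + s n * (y n).1 1 0 ∧
      (D n).1 0 1 = (y n).1 0 1 + s n * (y n).1 1 1 ∧ (D n).1 1 0 = (y n).1 1 0 ∧
      (D n).1 1 1 = (y n).1 1 1 := by
    intro n
    simp only [hD, mul_entries]
    simp [uMat]
  have hent : ∀ i j, Tendsto (fun n => (y n).1 i j) atTop (𝓝 (w.1 i j)) := by
    intro i j
    have hc : Continuous (fun g : SL2C => g.1 i j) :=
      (continuous_apply_apply i j).comp continuous_coe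
    exact (hc.tendsto w).comp hylim
  have hsinv : Tendsto (fun n => ((s n : ℂ))⁻¹) atTop (𝓝 0) := by
    have := (Complex.continuous_ofReal.tendsto 0).comp (tendsto_inv_atTop_zero.comp hslim)
    simpa [Function.comp_def] using this
  have hspos : ∀ n, (s n : ℂ) ≠ 0 := by
    intro n
    have h1 := ht (φ (n + N))
    have : (0 : ℝ) < t (φ (n + N)) := lt_of_lt_of_le (by positivity) h1
    exact_mod_cast this.ne'
  have hc0 : ∀ m, (D m).1 1 0 = 0 := by
    intro m
    by_contra hc
    have hcomm := fun n => (comm_iff _ _).1 (hcon (D m) (hDc m) (D n) (hDc n) (hDH m) (hDH n))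
    set a := (D m).1 0 0
    set b := (D m).1 0 1
    set c := (D m).1 1 0
    set d := (D m).1 1 1
    have e1 : ∀ n, (y n).1 1 1 = (s n : ℂ)⁻¹ * (b / c * (y n).1 1 0 - (y n).1 0 1) := by
      intro n
      obtain ⟨h1, h2, h3⟩ := hcomm n
      obtain ⟨f1, f2, f3, f4⟩ := hDe n
      rw [f2, f3] at h1
      have := hspos n
      field_simp
      linear_combination -h1
    have e2 : ∀ n, (y n).1 1 0 = (s n : ℂ)⁻¹ * ((a - d) / c * (y n).1 1 0 - (y n).1 0 0 + (y n).1 1 1) := by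
      intro n
      obtain ⟨h1, h2, h3⟩ := hcomm n
      obtain ⟨f1, f2, f3, f4⟩ := hDe n
      rw [f1, f3, f4] at h3
      have := hspos n
      field_simp
      linear_combination -h3
    have l1 : w.1 1 1 = 0 := by
      refine tendsto_nhds_unique (hent 1 1) ?_
      have := hsinv.mul (((hent 1 0).const_mul (b / c)).sub (hent 0 1))
      rw [zero_mul] at this
      exact this.congr fun n => (e1 n).symm
    have l2 : w.1 1 0 = 0 := by
      refine tendsto_nhds_unique (hent 1 0) ?_
      have := hsinv.mul ((((hent 1 0).const_mul ((a - d) / c)).sub (hent 0 0)).add (hent 1 1))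
      rw [zero_mul] at this
      exact this.congr fun n => (e2 n).symm
    have := det_eq w
    rw [l1, l2] at this
    simp at this
  have hsc : ∀ n, (D n).1 0 1 = 0 ∧ ‖(D n).1 1 1‖ = 1 := by
    intro n
    rcases hgood _ (hDc n) (hc0 n) with h | h <;> rw [h] <;> simp
  have hbd : ∀ n, s n = ‖(y n).1 0 1‖ := by
    intro n
    obtain ⟨f1, f2, f3, f4⟩ := hDe n
    obtain ⟨g1, g2⟩ := hsc n
    have : (y n).1 0 1 = - (s n * (D n).1 1 1) := by rw [f4]; rw [f2] at g1; linear_combination g1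
    rw [this, norm_neg, norm_mul, g2]
    have h1 := ht (φ (n + N))
    have : (0 : ℝ) ≤ s n := le_trans (by positivity) h1
    simp [abs_of_nonneg this]
  have : Tendsto s atTop (𝓝 ‖w.1 0 1‖) := (hent 0 1).norm.congr fun n => (hbd n).symm
  exact not_tendsto_nhds_of_tendsto_atTop hslim _ this

section lift
open MeasureTheory Measure Topology

theorem exists_section {G X : Type*} [TopologicalSpace G] [SecondCountableTopology G]
    [MeasurableSpace G] [BorelSpace G] [TopologicalSpace X] [MeasurableSpace X] [BorelSpace X]
    (P : G → X) (hPs : Function.Surjective P) (hPo : IsOpenMap P)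
    (hloc : ∀ k, ∃ U, IsOpen U ∧ k ∈ U ∧ Set.InjOn P U) [Nonempty G] :
    ∃ σ : X → G, (∀ x, P (σ x) = x) ∧ Measurable σ := by
  classical
  choose V hVo hV hVi using hloc
  obtain ⟨s, hs, hsU⟩ := TopologicalSpace.countable_cover_nhds
    (fun k => (hVo k).mem_nhds (hV k))
  have hsn : s.Nonempty := by
    by_contra h
    rw [Set.not_nonempty_iff_eq_empty] at h
    subst h
    obtain ⟨k⟩ := ‹Nonempty G›
    have := Set.mem_univ k
    rw [← hsU] at this
    simp at this
  obtain ⟨e, rfl⟩ := hs.exists_eq_range hsn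
  have hex : ∀ x, ∃ i, x ∈ P '' V (e i) := by
    intro x
    obtain ⟨k, rfl⟩ := hPs x
    have := Set.mem_univ k
    rw [← hsU] at this
    simp only [Set.mem_range, Set.iUnion_exists, Set.iUnion_iUnion_eq', Set.mem_iUnion] at this
    obtain ⟨i, hi⟩ := this
    exact ⟨i, k, hi, rfl⟩
  have hsp : ∀ x, ∃ k ∈ V (e (Nat.find (hex x))), P k = x := fun x => Nat.find_spec (hex x)
  choose σ hσV hσ using hsp
  refine ⟨σ, hσ, measurable_of_isOpen fun O hO => ?_⟩
  have : σ ⁻¹' O = ⋃ i, (P '' (V (e i) ∩ O) \ ⋃ j ∈ Finset.range i, P '' V (e j)) := by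
    ext x
    simp only [Set.mem_preimage, Set.mem_iUnion, Set.mem_sdiff, Finset.mem_range, exists_prop,
      not_exists, not_and]
    constructor
    · intro hx
      exact ⟨Nat.find (hex x), ⟨σ x, ⟨hσV x, hx⟩, hσ x⟩, fun j hj => Nat.find_min (hex x) hj⟩
    · rintro ⟨i, ⟨k, ⟨hkV, hkO⟩, hk⟩, hmin⟩
      have hi : Nat.find (hex x) = i :=
        (Nat.find_eq_iff (hex x)).2 ⟨⟨k, hkV, hk⟩, fun j hj => hmin j hj⟩
      have h1 := hσV x
      rw [hi] at h1
      rw [hVi (e i) h1 hkV ((hσ x).trans hk.symm)]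
      exact hkO
  rw [this]
  refine MeasurableSet.iUnion fun i => ((hPo _ ((hVo _).inter hO)).measurableSet.diff ?_)
  exact Finset.measurableSet_biUnion _ fun j _ => (hPo _ (hVo _)).measurableSet

theorem haar_lift {G X : Type*} [Group G] [TopologicalSpace G] [IsTopologicalGroup G]
    [LocallyCompactSpace G] [SecondCountableTopology G]
    [MeasurableSpace G] [BorelSpace G] [TopologicalSpace X] [MeasurableSpace X] [BorelSpace X]
    (Γ : Subgroup G) [Countable Γ]
    (P : G → X) (hPs : Function.Surjective P) (hPo : IsOpenMap P)
    (hP : ∀ a b, P a = P b ↔ b * a⁻¹ ∈ Γ)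
    (hloc : ∀ k, ∃ U, IsOpen U ∧ k ∈ U ∧ Set.InjOn P U)
    (α : G → X → X) (hα : ∀ g k, α g (P k) = P (k * g)) (hαm : ∀ g, Measurable (α g))
    (μ : Measure X) [IsFiniteMeasure μ] (hμ : μ ≠ 0) (hinv : ∀ g, map (α g) μ = μ) :
    ∃ m : Measure G, m.IsMulRightInvariant ∧ IsFiniteMeasureOnCompacts m ∧ m ≠ 0 ∧
      ∀ E, MeasurableSet E → Set.InjOn P E → m E ≤ μ Set.univ := by
  obtain ⟨σ, hσ, hσm⟩ := exists_section P hPs hPo hloc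
  have hm1 : ∀ γ : Γ, Measurable (fun x => γ.1 * σ x) := fun γ => hσm.const_mul _
  set m : Measure G := Measure.sum (fun γ : Γ => map (fun x => γ.1 * σ x) μ) with hm
  set N : Set G → X → ENNReal := fun E x => ∑' γ : Γ, E.indicator 1 (γ.1 * σ x) with hN
  have hNm : ∀ E, MeasurableSet E → Measurable (N E) := fun E hE =>
    Measurable.tsum fun γ => (measurable_one.indicator hE).comp (hm1 γ)
  have hmE : ∀ E, MeasurableSet E → m E = ∫⁻ x, N E x ∂μ := by
    intro E hE
    rw [hm, sum_apply _ hE, hN, lintegral_tsum]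
    · congr 1; funext γ
      rw [map_apply (hm1 γ) hE, ← lintegral_indicator_one (hm1 γ hE)]
      rfl
    · exact fun γ => ((measurable_one.indicator hE).comp (hm1 γ)).aemeasurable
  have hNk : ∀ E k, N E (P k) = ∑' γ : Γ, E.indicator (1 : G → ENNReal) (γ.1 * k) := by
    intro E k
    have h1 : k * (σ (P k))⁻¹ ∈ Γ := (hP _ _).1 (hσ (P k))
    rw [← (Equiv.mulRight (⟨_, h1⟩ : Γ)).tsum_eq]
    simp only [hN]
    rw [← (Equiv.mulRight (⟨_, h1⟩ : Γ)).tsum_eq]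
    rw [(Equiv.mulRight (⟨_, h1⟩ : Γ)).tsum_eq (fun γ : Γ => E.indicator (1 : G → ENNReal) (γ.1 * k))]
    congr 1; funext γ
    simp [mul_assoc]
  have hbound : ∀ E, MeasurableSet E → Set.InjOn P E → m E ≤ μ Set.univ := by
    intro E hE hi
    rw [hmE E hE, ← lintegral_one]
    refine lintegral_mono fun x => ?_
    change ∑' γ : Γ, E.indicator (1 : G → ENNReal) (γ.1 * σ x) ≤ 1
    by_cases h : ∃ γ : Γ, γ.1 * σ x ∈ E
    · obtain ⟨γ, hγ⟩ := h
      rw [tsum_eq_single γ]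
      · exact Set.indicator_le_self' (by simp) _
      · intro γ' hne
        apply Set.indicator_of_notMem
        intro hγ'
        apply hne
        have : P (γ'.1 * σ x) = P (γ.1 * σ x) := by
          rw [hP]
          have : γ.1 * σ x * (γ'.1 * σ x)⁻¹ = γ.1 * γ'.1⁻¹ := by group
          rw [this]
          exact Γ.mul_mem γ.2 (Γ.inv_mem γ'.2)
        have := hi hγ' hγ this
        exact Subtype.ext (mul_right_cancel this)
    · push Not at h
      simp [h]
  refine ⟨m, ⟨fun g => ?_⟩, ⟨fun K hK => ?_⟩, ?_, hbound⟩
  · ext E hE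
    have hE' : MeasurableSet ((fun x => x * g) ⁻¹' E) := (measurable_mul_const g) hE
    rw [map_apply (measurable_mul_const g) hE, hmE _ hE', hmE _ hE]
    conv_rhs => rw [← hinv g, lintegral_map (hNm E hE) (hαm g)]
    congr 1; funext x
    obtain ⟨k, rfl⟩ := hPs x
    rw [hα, hNk, hNk]
    congr 1; funext γ
    change E.indicator (1 : G → ENNReal) (γ.1 * k * g) = _
    rw [mul_assoc]
  · refine hK.induction_on (p := fun s => m s < ⊤) (by simp)
      (fun s t hst ht => (measure_mono hst).trans_lt ht)
      (fun s t hs ht => (measure_union_le s t).trans_lt (ENNReal.add_lt_top.2 ⟨hs, ht⟩)) ?_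
    intro x _
    obtain ⟨U, hU, hxU, hi⟩ := hloc x
    exact ⟨U, mem_nhdsWithin_of_mem_nhds (hU.mem_nhds hxU),
      (hbound U hU.measurableSet hi).trans_lt (measure_lt_top _ _)⟩
  · intro h0
    apply hμ
    rw [← measure_univ_eq_zero]
    have h1 : m Set.univ = 0 := by rw [h0]; simp
    rw [hm, sum_apply _ MeasurableSet.univ, ENNReal.tsum_eq_zero] at h1
    have := h1 1
    rwa [map_apply (hm1 1) MeasurableSet.univ] at this

theorem right_inv_props {G : Type*} [Group G] [TopologicalSpace G] [IsTopologicalGroup G]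
    [LocallyCompactSpace G] [SecondCountableTopology G] [T2Space G]
    [MeasurableSpace G] [BorelSpace G] (m : Measure G) [m.IsMulRightInvariant]
    [IsFiniteMeasureOnCompacts m] (hm : m ≠ 0) :
    (∀ O, IsOpen O → O.Nonempty → 0 < m O) ∧
    (∀ x y : G, ∀ E, MeasurableSet E → m ((fun k => x * y * x⁻¹ * y⁻¹ * k) ⁻¹' E) = m E) := by
  have hfin : IsFiniteMeasureOnCompacts m.inv := ⟨fun K hK => by
    rw [Measure.inv_apply]; exact hK.inv.measure_lt_top⟩
  have hn := isMulLeftInvariant_eq_smul m.inv (haar : Measure G)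
  set c := haarScalarFactor m.inv (haar : Measure G)
  have hc : c ≠ 0 := by
    intro h
    apply hm
    rw [h, zero_smul] at hn
    rw [← Measure.inv_inv m, hn]
    simp [Measure.inv]
  have hE : ∀ E, m E = c * (haar : Measure G) E⁻¹ := by
    intro E
    conv_lhs => rw [← Measure.inv_inv m, Measure.inv_apply, hn]
    simp
  constructor
  · intro O hO hne
    rw [hE]
    have h1 : 0 < (haar : Measure G) O⁻¹ := hO.inv.measure_pos _ (by simpa using hne)
    refine ENNReal.mul_pos (by simpa using hc) h1.ne'
  · intro x y E hEm
    rw [hE, hE]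
    congr 1
    have hχ : modularCharacterFun (x * y * x⁻¹ * y⁻¹) = 1 := by
      change modularCharacter (x * y * x⁻¹ * y⁻¹) = 1
      rw [map_mul, map_mul, map_mul, mul_right_comm (modularCharacter x), ← map_mul,
        mul_inv_cancel, map_one, one_mul, ← map_mul, mul_inv_cancel, map_one]
    have h2 := map_right_mul_eq_modularCharacterFun_smul (haar : Measure G) (x * y * x⁻¹ * y⁻¹)⁻¹
    have hχ' : modularCharacterFun (x * y * x⁻¹ * y⁻¹)⁻¹ = 1 := by
      have h3 := modularCharacterFun_map_mul (x * y * x⁻¹ * y⁻¹) (x * y * x⁻¹ * y⁻¹)⁻¹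
      rw [mul_inv_cancel, modularCharacterFun_map_one, hχ, one_mul] at h3
      exact h3.symm
    rw [hχ', one_smul] at h2
    conv_rhs => rw [← h2, map_apply (measurable_mul_const _) hEm.inv]
    congr 1
    ext k
    simp only [Set.mem_inv, Set.mem_preimage, _root_.mul_inv_rev, inv_inv, mul_assoc]
end lift

/-- projection from `SL(2,ℂ)` to the homogeneous space -/
def PX (Γ : Subgroup PSL2C) (k : SL2C) : XΓ Γ := mkX Γ (pr k)

lemma pr_surj : Function.Surjective pr := QuotientGroup.mk'_surjective _

lemma PX_surj (Γ : Subgroup PSL2C) : Function.Surjective (PX Γ) := by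
  intro x
  obtain ⟨y, rfl⟩ := Quotient.exists_rep x
  obtain ⟨k, rfl⟩ := pr_surj y
  exact ⟨k, rfl⟩

lemma PX_eq (Γ : Subgroup PSL2C) (a b : SL2C) : PX Γ a = PX Γ b ↔ b * a⁻¹ ∈ lft Γ := by
  have : PX Γ a = PX Γ b ↔ (QuotientGroup.rightRel Γ) (pr a) (pr b) := Quotient.eq''
  rw [this, QuotientGroup.rightRel_apply]
  simp [lft, map_mul, map_inv]

lemma continuous_PX (Γ : Subgroup PSL2C) : Continuous (PX Γ) :=
  continuous_quot_mk.comp continuous_pr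

lemma isQuotientMap_PX (Γ : Subgroup PSL2C) : Topology.IsQuotientMap (PX Γ) := by
  have h1 : Topology.IsQuotientMap pr := isQuotientMap_quot_mk
  have h2 : Topology.IsQuotientMap (mkX Γ) := isQuotientMap_quot_mk
  exact h2.comp h1

lemma isOpenMap_PX (Γ : Subgroup PSL2C) : IsOpenMap (PX Γ) := by
  intro O hO
  rw [← (isQuotientMap_PX Γ).isOpen_preimage]
  have : PX Γ ⁻¹' (PX Γ '' O) = ⋃ γ ∈ lft Γ, (fun k => γ * k) ⁻¹' O := by
    ext k
    simp only [Set.mem_preimage, Set.mem_image, Set.mem_iUnion, exists_prop]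
    constructor
    · rintro ⟨y, hy, h⟩
      refine ⟨y * k⁻¹, ?_, by simpa using hy⟩
      exact (PX_eq Γ k y).1 h.symm
    · rintro ⟨γ, hγ, h⟩
      refine ⟨_, h, ?_⟩
      rw [eq_comm, PX_eq]; simpa using hγ
  rw [this]
  exact isOpen_biUnion fun γ _ => hO.preimage (continuous_const.mul continuous_id)

lemma act_PX (Γ : Subgroup PSL2C) (g k : SL2C) : act Γ (PX Γ k) (pr g) = PX Γ (k * g) := by
  change mkX Γ (pr k * pr g) = _
  rw [← map_mul]; rfl

lemma continuous_act (Γ : Subgroup PSL2C) (g : SL2C) : Continuous (fun x => act Γ x (pr g)) := by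
  rw [(isQuotientMap_PX Γ).continuous_iff]
  have : (fun x => act Γ x (pr g)) ∘ PX Γ = fun k => PX Γ (k * g) := by
    funext k; exact act_PX Γ g k
  rw [this]
  exact (continuous_PX Γ).comp (continuous_id.mul continuous_const)

lemma exists_small_nhd {Γ : Subgroup SL2C} (hΓ : LF Γ) :
    ∃ V : Set SL2C, IsOpen V ∧ 1 ∈ V ∧ ∀ γ ∈ V, γ ∈ Γ → γ = 1 := by
  have hFf : ({γ : SL2C | γ ∈ Γ ∧ nrm γ.1 ≤ 3} \ {1}).Finite := (hΓ 3).subset Set.sdiff_subset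
  refine ⟨{w : SL2C | nrm w.1 < 3} ∩ ({γ : SL2C | γ ∈ Γ ∧ nrm γ.1 ≤ 3} \ {1})ᶜ, ?_, ?_, ?_⟩
  · exact (isOpen_lt (continuous_nrm.comp continuous_coe) continuous_const).inter
      hFf.isClosed.isOpen_compl
  · refine ⟨?_, by simp⟩
    change nrm (1 : M2) < 3
    rw [nrm_one]; norm_num
  · rintro γ ⟨h1, h2⟩ h3
    by_contra hne
    exact h2 ⟨⟨h3, le_of_lt h1⟩, hne⟩

lemma exists_inj_nhd {G : Type*} [Group G] [TopologicalSpace G] [IsTopologicalGroup G] {V : Set G}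
    (hV : IsOpen V) (h1 : (1 : G) ∈ V) (k : G) :
    ∃ U : Set G, IsOpen U ∧ k ∈ U ∧ ∀ a ∈ U, ∀ b ∈ U, b * a⁻¹ ∈ V := by
  have hc : Continuous (fun p : G × G => p.2 * p.1⁻¹) :=
    continuous_snd.mul continuous_fst.inv
  have hn : (fun p : G × G => p.2 * p.1⁻¹) ⁻¹' V ∈ nhds (k, k) :=
    (hV.preimage hc).mem_nhds (by simpa using h1)
  rw [nhds_prod_eq, mem_prod_self_iff] at hn
  obtain ⟨U, hU, hUV⟩ := hn
  obtain ⟨Uo, hUsub, hUop, hk⟩ := mem_nhds_iff.1 hU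
  exact ⟨Uo, hUop, hk, fun a ha b hb => hUV (Set.mk_mem_prod (hUsub ha) (hUsub hb))⟩

lemma PX_loc (Γ : Subgroup PSL2C) (hdisc : DiscreteTopology Γ) (k : SL2C) :
    ∃ U, IsOpen U ∧ k ∈ U ∧ Set.InjOn (PX Γ) U := by
  obtain ⟨V, hVo, h1V, hV⟩ := exists_small_nhd (LF_lft Γ hdisc)
  obtain ⟨U, hU, hk, hUV⟩ := exists_inj_nhd hVo h1V k
  refine ⟨U, hU, hk, ?_⟩
  intro a ha b hb hab
  have h3 := hV _ (hUV a ha b hb) ((PX_eq Γ a b).1 hab)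
  exact (mul_inv_eq_one.1 h3).symm

lemma conj_comm_aux {G : Type*} [Group G] (g u x y k : G) (h : u⁻¹ = x * y * x⁻¹ * y⁻¹) :
    (g * u)⁻¹ * k = (g * 1)⁻¹ * (g * x * g⁻¹ * (g * y * g⁻¹) *
        (g * x * g⁻¹)⁻¹ * (g * y * g⁻¹)⁻¹ * k) := by
  have h1 : g * x * g⁻¹ * (g * y * g⁻¹) * (g * x * g⁻¹)⁻¹ * (g * y * g⁻¹)⁻¹ =
    g * (x * y * x⁻¹ * y⁻¹) * g⁻¹ := by group
  rw [h1, ← h]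
  group

lemma uMat_comm (t : ℝ) : ∃ x y : SL2C, uMat (-t) = x * y * x⁻¹ * y⁻¹ := by
  refine ⟨tri 2 (by norm_num) 0, uMat (-t/3), ?_⟩
  rw [eq_mul_inv_iff_mul_eq, eq_mul_inv_iff_mul_eq]
  apply SL_ext <;> simp only [mul_entries] <;> simp [uMat, tri] <;> ring

/-- small neighbourhood of the identity -/
def Wn : Set SL2C := {w | nrm (w.1 - 1) < 1/100}

lemma isOpen_Wn : IsOpen Wn :=
  isOpen_lt (continuous_nrm.comp (continuous_coe.sub continuous_const)) continuous_const

lemma Wn_mul {w w' : SL2C} (hw : w ∈ Wn) (hw' : w' ∈ Wn) : nrm ((w' * w⁻¹).1 - 1) < 1/20 := by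
  have hw0 : nrm (w.1 - 1) < 1/100 := hw
  have hw0' : nrm (w'.1 - 1) < 1/100 := hw'
  have e : (w' * w⁻¹).1 - 1 = ((w'.1 - 1) - (w.1 - 1)) * (w⁻¹).1 := by
    have h2 : w.1 * (w⁻¹).1 = 1 := by
      have : (w * w⁻¹).1 = 1 := by simp
      exact this
    change w'.1 * (w⁻¹).1 - 1 = _
    rw [← h2]; noncomm_ring
  rw [e]
  refine (nrm_mul _ _).trans_lt ?_
  have h1 := nrm_sub (w'.1 - 1) (w.1 - 1)
  have h2 := nrm_le_of_small hw0
  rw [nrm_inv]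
  have := nrm_nonneg w.1
  have := nrm_nonneg ((w'.1 - 1) - (w.1 - 1))
  nlinarith

/-- thick times -/
def Thick (Γ : Subgroup SL2C) (g : SL2C) (t : ℝ) : Prop :=
  ∀ p ∈ cj Γ g, nrm ((fl t p).1 - 1) < 1/20 → p = 1

/-- boxes -/
def Et (g : SL2C) (t : ℝ) : Set SL2C := {k | (g * uMat t)⁻¹ * k ∈ Wn}

lemma Et_open (g : SL2C) (t : ℝ) : IsOpen (Et g t) :=
  isOpen_Wn.preimage (continuous_const.mul continuous_id)

lemma Et_inj {Γ : Subgroup PSL2C} {g : SL2C} {t : ℝ} (ht : Thick (lft Γ) g t) :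
    Set.InjOn (PX Γ) (Et g t) := by
  intro a ha b hb hab
  have h1 := (PX_eq Γ a b).1 hab
  set p := g⁻¹ * (b * a⁻¹) * g with hp
  have hpc : p ∈ cj (lft Γ) g := by
    rw [mem_cj]
    have : g * p * g⁻¹ = b * a⁻¹ := by rw [hp]; group
    rwa [this]
  have h2 := Wn_mul ha hb
  have h3 : (g * uMat t)⁻¹ * b * ((g * uMat t)⁻¹ * a)⁻¹ = fl t p := by
    rw [fl_eq_conj, hp]; group
  rw [h3] at h2
  have h4 := ht p hpc h2
  have h5 : b * a⁻¹ = g * p * g⁻¹ := by rw [hp]; group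
  rw [h4] at h5
  simp at h5
  exact (mul_inv_eq_one.1 h5).symm

lemma Et_disj {Γ : Subgroup PSL2C} {g : SL2C} {s t : ℝ} 
    (ht : ∀ γ ∈ lft Γ, 3 * nrm (g * uMat s).1 < nrm (γ * (g * uMat t)).1) {a b : SL2C}
    (ha : a ∈ Et g t) (hb : b ∈ Et g s) : PX Γ a ≠ PX Γ b := by
  intro hab
  have h1 := (PX_eq Γ a b).1 hab
  have h2 := Wn_mul ha hb
  have h3 := ht _ h1
  have h4 : b * a⁻¹ * (g * uMat t) =
      (g * uMat s) * ((g * uMat s)⁻¹ * b * ((g * uMat t)⁻¹ * a)⁻¹) := by group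
  rw [h4] at h3
  have h5 := nrm_mul' (g * uMat s) ((g * uMat s)⁻¹ * b * ((g * uMat t)⁻¹ * a)⁻¹)
  have h6 := nrm_le_of_small h2
  have h7 := nrm_nonneg (g * uMat s).1
  nlinarith

lemma mem_Et {g : SL2C} {t : ℝ} {k : SL2C} : k ∈ Et g t ↔ (g * uMat t)⁻¹ * k ∈ Wn := Iff.rfl

lemma Et_shift (g : SL2C) (t : ℝ) : ∃ x y : SL2C,
    Et g t = (fun k => x * y * x⁻¹ * y⁻¹ * k) ⁻¹' Et g 0 := by
  obtain ⟨x, y, hxy⟩ := uMat_comm t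
  refine ⟨g * x * g⁻¹, g * y * g⁻¹, ?_⟩
  ext k
  have h := conj_comm_aux g (uMat t) x y k ((uMat_inv t).trans hxy)
  rw [Set.mem_preimage, mem_Et, mem_Et, Complex.ofReal_zero, uMat_zero, h]

lemma self_mem_Et (g : SL2C) (t : ℝ) : g * uMat t ∈ Et g t := by
  rw [mem_Et, inv_mul_cancel]
  simp [Wn, nrm]

open MeasureTheory in
lemma exists_meas (Γ : Subgroup PSL2C) (hdisc : DiscreteTopology Γ) (hlat : IsLattice Γ)
    (g : SL2C) [MeasurableSpace SL2C] [BorelSpace SL2C] :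
    ∃ m : Measure SL2C, ∃ c B : ENNReal, c ≠ 0 ∧ B ≠ ⊤ ∧ (∀ t, m (Et g t) = c) ∧
      ∀ E, MeasurableSet E → Set.InjOn (PX Γ) E → m E ≤ B := by
  let _ : MeasurableSpace (XΓ Γ) := borel _
  have : BorelSpace (XΓ Γ) := ⟨rfl⟩
  obtain ⟨μ, hμ0, hμf, hμ⟩ := hlat
  have hcount : Countable (lft Γ) := (LF_countable (LF_lft Γ hdisc)).to_subtype
  obtain ⟨m, hmr, hmf, hm0, hmb⟩ := haar_lift (lft Γ) (PX Γ) (PX_surj Γ) (isOpenMap_PX Γ) (PX_eq Γ)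
    (PX_loc Γ hdisc) (fun g x => act Γ x (pr g)) (fun g k => act_PX Γ g k)
    (fun g => (continuous_act Γ g).measurable) μ hμ0 (fun g => hμ (pr g))
  obtain ⟨hpos, hcomm⟩ := right_inv_props m hm0
  refine ⟨m, m (Et g 0), μ Set.univ, (hpos _ (Et_open g 0) ⟨_, self_mem_Et g 0⟩).ne',
    measure_ne_top _ _, ?_, hmb⟩
  intro t
  obtain ⟨x, y, h⟩ := Et_shift g t
  rw [h]
  exact hcomm x y (Et g 0) (Et_open g 0).measurableSet

open MeasureTheory in
theorem thick_bounded (Γ : Subgroup PSL2C) (hdisc : DiscreteTopology Γ) (hlat : IsLattice Γ)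
    (g : SL2C) : ∃ R : ℝ, ∀ t : ℝ, Thick (lft Γ) g t →
      ∃ γ ∈ lft Γ, nrm (γ * (g * uMat t)).1 ≤ R := by
  by_contra hcon
  push Not at hcon
  let _ : MeasurableSpace SL2C := borel _
  have : BorelSpace SL2C := ⟨rfl⟩
  obtain ⟨m, c, B, hc, hB, hEt, hmb⟩ := exists_meas Γ hdisc hlat g
  have key : ∀ n : ℕ, ∃ F : Finset ℝ, F.card = n ∧ (∀ t ∈ F, Thick (lft Γ) g t) ∧
      ∀ s ∈ F, ∀ t ∈ F, s ≠ t → ∀ a ∈ Et g s, ∀ b ∈ Et g t, PX Γ a ≠ PX Γ b := by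
    intro n
    induction n with
    | zero => exact ⟨∅, by simp⟩
    | succ n ih =>
      obtain ⟨F, hF, hth, hd⟩ := ih
      obtain ⟨t, ht, htR⟩ := hcon (∑ s ∈ F, 3 * nrm (g * uMat s).1)
      have hle : ∀ s ∈ F, 3 * nrm (g * uMat s).1 ≤ ∑ s ∈ F, 3 * nrm (g * uMat s).1 := fun s hs =>
        Finset.single_le_sum (f := fun s : ℝ => 3 * nrm (g * uMat s).1)
          (fun s _ => mul_nonneg (by norm_num) (nrm_nonneg _)) hs
      have hdt : ∀ s ∈ F, ∀ a ∈ Et g t, ∀ b ∈ Et g s, PX Γ a ≠ PX Γ b := fun s hs a ha b hb =>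
        Et_disj (fun γ hγ => (hle s hs).trans_lt (htR γ hγ)) ha hb
      have htF : t ∉ F := by
        intro h
        have h0 := self_mem_Et g t
        exact hdt t h _ h0 _ h0 rfl
      refine ⟨insert t F, by rw [Finset.card_insert_of_notMem htF, hF], ?_, ?_⟩
      · intro s hs
        rcases Finset.mem_insert.1 hs with rfl | hs
        · exact ht
        · exact hth s hs
      · intro s hs s' hs' hne a ha b hb
        rcases Finset.mem_insert.1 hs with rfl | h1 <;> rcases Finset.mem_insert.1 hs' with rfl | h2
        · exact absurd rfl hne
        · exact hdt _ h2 a ha b hb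
        · exact (hdt _ h1 b hb a ha).symm
        · exact hd s h1 s' h2 hne a ha b hb
  have hle : ∀ n : ℕ, (n : ENNReal) * c ≤ B := by
    intro n
    obtain ⟨F, hF, hth, hd⟩ := key n
    have hmeas : MeasurableSet (⋃ t ∈ F, Et g t) :=
      Finset.measurableSet_biUnion _ fun t _ => (Et_open g t).measurableSet
    have h1 := hmb (⋃ t ∈ F, Et g t) hmeas (by
      intro a ha b hb hab
      simp only [Set.mem_iUnion, exists_prop] at ha hb
      obtain ⟨s, hs, ha⟩ := ha
      obtain ⟨t, ht, hb⟩ := hb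
      by_cases hst : s = t
      · subst hst
        exact Et_inj (hth s hs) ha hb hab
      · exact absurd hab (hd s hs t ht hst a ha b hb))
    rw [measure_biUnion_finset] at h1
    · simpa [hEt, hF] using h1
    · intro s hs t ht hst
      refine Set.disjoint_left.2 fun a ha hb => ?_
      exact hd s hs t ht hst a ha a hb rfl
    · exact fun t _ => (Et_open g t).measurableSet
  obtain ⟨n, hn⟩ := ENNReal.exists_nat_mul_gt hc hB
  exact absurd (hle n) (not_le.2 hn)

lemma mem_Hset {x : PSL2C} : x ∈ Hset ↔ ∃ h ∈ Hr, x = pr h := by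
  constructor
  · rintro ⟨h, rfl⟩; exact ⟨_, ⟨h, rfl⟩, rfl⟩
  · rintro ⟨_, ⟨h, rfl⟩, rfl⟩; exact ⟨h, rfl⟩

lemma mem_orb {Γ : Subgroup PSL2C} {g : SL2C} {x : XΓ Γ} :
    x ∈ orb Γ (PX Γ g) Hset ↔ ∃ h ∈ Hr, x = PX Γ (g * h) := by
  constructor
  · rintro ⟨s, hs, rfl⟩
    obtain ⟨h, hh, rfl⟩ := mem_Hset.1 hs
    exact ⟨h, hh, act_PX Γ h g⟩
  · rintro ⟨h, hh, rfl⟩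
    exact ⟨pr h, mem_Hset.2 ⟨h, hh, rfl⟩, act_PX Γ h g⟩

lemma orb_mul {Γ : Subgroup PSL2C} (g : SL2C) {h : SL2C} (hh : h ∈ Hr) :
    orb Γ (PX Γ (g * h)) Hset = orb Γ (PX Γ g) Hset := by
  ext x
  rw [mem_orb, mem_orb]
  constructor
  · rintro ⟨k, hk, rfl⟩
    exact ⟨h * k, Hr.mul_mem hh hk, by rw [mul_assoc]⟩
  · rintro ⟨k, hk, rfl⟩
    refine ⟨h⁻¹ * k, Hr.mul_mem (Hr.inv_mem hh) hk, ?_⟩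
    rw [mul_assoc, mul_inv_cancel_left]

lemma SS_closed {Γ : Subgroup PSL2C} {g : SL2C} (h : IsClosed (orb Γ (PX Γ g) Hset)) :
    IsClosed (SS (lft Γ) g) := by
  have : SS (lft Γ) g = PX Γ ⁻¹' orb Γ (PX Γ g) Hset := by
    ext k
    rw [Set.mem_preimage, mem_orb]
    constructor
    · rintro ⟨γ, hγ, h, hh, rfl⟩
      refine ⟨h, hh, ?_⟩
      rw [eq_comm, PX_eq, mul_assoc γ, mul_inv_cancel_right]
      exact hγ
    · rintro ⟨h, hh, hk⟩
      rw [eq_comm, PX_eq] at hk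
      exact ⟨_, hk, h, hh, by group⟩
  rw [this]
  exact h.preimage (continuous_PX Γ)

/-- real matrix sending infinity to `s` -/
def hs (s : ℝ) : SL2C := ⟨!![(s : ℂ), -1; 1, 0], by simp [Matrix.det_fin_two_of]⟩

lemma hs_mem (s : ℝ) : hs s ∈ Hr := by
  rw [mem_Hr]; intro i j; fin_cases i <;> fin_cases j <;> simp [hs]

lemma hs_conj (s : ℝ) (p : SL2C) (h : p.1 1 0 = 0) :
    let M := hs s * p * (hs s)⁻¹
    M.1 1 0 * s ^ 2 + (M.1 1 1 - M.1 0 0) * s - M.1 0 1 = 0 := by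
  intro M
  have hM : M * hs s = hs s * p := by simp [M]
  have e := fun i j => congrArg (fun x : SL2C => x.1 i j) hM
  simp only [mul_entries] at e
  have e1 := e 0 0; have e3 := e 1 0
  simp [hs, h] at e1 e3
  linear_combination -e1 + s * e3

lemma quad_finite (M : SL2C) (h1 : M ≠ 1) (h2 : M ≠ -1) :
    {s : ℝ | M.1 1 0 * s ^ 2 + (M.1 1 1 - M.1 0 0) * s - M.1 0 1 = 0}.Finite := by
  set q : Polynomial ℂ := Polynomial.C (M.1 1 0) * Polynomial.X ^ 2 +
    Polynomial.C (M.1 1 1 - M.1 0 0) * Polynomial.X + Polynomial.C (- M.1 0 1) with hq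
  have hq0 : q ≠ 0 := by
    intro h0
    have c0 := congrArg (fun p => Polynomial.coeff p 0) h0
    have c1 := congrArg (fun p => Polynomial.coeff p 1) h0
    have c2 := congrArg (fun p => Polynomial.coeff p 2) h0
    simp [hq, Polynomial.coeff_X, Polynomial.coeff_C] at c0 c1 c2
    rcases central_of M c0 c2 (by linear_combination -c1) with h | h
    · exact h1 h
    · exact h2 h
  have hf : {z : ℂ | q.IsRoot z}.Finite := Polynomial.finite_setOf_isRoot hq0
  refine (hf.preimage (Complex.ofReal_injective.injOn)).subset ?_
  intro s hs
  simp only [Set.mem_setOf_eq] at hs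
  simp only [Set.mem_preimage, Set.mem_setOf_eq, Polynomial.IsRoot, hq]
  simp only [Polynomial.eval_add, Polynomial.eval_mul, Polynomial.eval_C, Polynomial.eval_pow,
    Polynomial.eval_X]
  linear_combination hs

lemma exists_good {Γ : Subgroup SL2C} (hΓ : LF Γ) (g0 : SL2C) : ∃ s : ℝ,
    ∀ M ∈ cj Γ (g0 * hs s), M.1 1 0 = 0 → M = 1 ∨ M = -1 := by
  have hc : (cj Γ g0 : Set SL2C).Countable := LF_countable (LF_cj hΓ g0)
  set B : Set ℝ := ⋃ M ∈ {M | M ∈ (cj Γ g0 : Set SL2C) ∧ M ≠ 1 ∧ M ≠ -1},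
    {s : ℝ | M.1 1 0 * s ^ 2 + (M.1 1 1 - M.1 0 0) * s - M.1 0 1 = 0} with hB
  have hBc : B.Countable := by
    refine Set.Countable.biUnion (hc.mono fun M hM => hM.1) ?_
    intro M hM
    exact (quad_finite M hM.2.1 hM.2.2).countable
  have hne : ∃ s, s ∉ B := by
    by_contra! h
    have : (Set.univ : Set ℝ).Countable := hBc.mono fun s _ => h s
    exact Set.not_countable_univ this
  obtain ⟨s, hs'⟩ := hne
  refine ⟨s, fun p hp h10 => ?_⟩
  by_contra hcon
  push Not at hcon
  apply hs'
  refine Set.mem_biUnion (x := hs s * p * (hs s)⁻¹) ⟨?_, ?_, ?_⟩ (hs_conj s p h10)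
  · have h1 := mem_cj.1 hp
    change hs s * p * (hs s)⁻¹ ∈ cj Γ g0
    rw [mem_cj]
    have : g0 * (hs s * p * (hs s)⁻¹) * g0⁻¹ = g0 * hs s * p * (g0 * hs s)⁻¹ := by group
    rwa [this]
  · intro h
    apply hcon.1
    have : p = (hs s)⁻¹ * (hs s * p * (hs s)⁻¹) * hs s := by group
    rw [this, h]; group
  · intro h
    apply hcon.2
    have : p = (hs s)⁻¹ * (hs s * p * (hs s)⁻¹) * hs s := by group
    rw [this, h]; simp

/-- complex conjugation -/
def cc : SL2C →* SL2C := Matrix.SpecialLinearGroup.map (n := Fin 2) (starRingEnd ℂ)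

lemma cc_entry (g : SL2C) (i j : Fin 2) : (cc g).1 i j = starRingEnd ℂ (g.1 i j) := rfl

lemma cc_real {g : SL2C} (h : g ∈ Hr) : cc g = g := by
  rw [mem_Hr] at h
  apply SL_ext <;> rw [cc_entry] <;> exact Complex.conj_eq_iff_im.2 (h _ _)

lemma real_of_cc {g : SL2C} (h : cc g = g) : g ∈ Hr := by
  rw [mem_Hr]
  intro i j
  rw [← Complex.conj_eq_iff_im, ← cc_entry, h]

/-- `diag(i,-i)` -/
def iD : SL2C := ⟨!![Complex.I, 0; 0, -Complex.I], by simp [Matrix.det_fin_two_of]⟩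

lemma cc_iD : cc iD = -1 * iD := by
  apply SL_ext <;> simp only [mul_entries, cc_entry] <;> simp [iD]

lemma noncomm_coset {g g' γ γ' : SL2C} (h1 : g⁻¹ * γ * g ∈ Hr) (h2 : g⁻¹ * γ' * g ∈ Hr)
    (h3 : g'⁻¹ * γ * g' ∈ Hr) (h4 : g'⁻¹ * γ' * g' ∈ Hr)
    (hne : γ * γ' ≠ γ' * γ) : g⁻¹ * g' ∈ Hr ∨ (g * iD)⁻¹ * g' ∈ Hr := by
  have comm : ∀ γ : SL2C, g⁻¹ * γ * g ∈ Hr → g'⁻¹ * γ * g' ∈ Hr →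
      (cc (g⁻¹ * g') * (g⁻¹ * g')⁻¹) * (g⁻¹ * γ * g) =
      (g⁻¹ * γ * g) * (cc (g⁻¹ * g') * (g⁻¹ * g')⁻¹) := by
    intro γ ha hb
    obtain ⟨k, hk⟩ : ∃ k, k = g⁻¹ * g' := ⟨_, rfl⟩
    obtain ⟨d, hd⟩ : ∃ d, d = g⁻¹ * γ * g := ⟨_, rfl⟩
    have e : g'⁻¹ * γ * g' = k⁻¹ * d * k := by rw [hk, hd]; group
    rw [e] at hb
    rw [← hd] at ha ⊢
    rw [← hk]
    have h5 := cc_real hb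
    rw [map_mul, map_mul, map_inv, cc_real ha] at h5
    have h6 : d * cc k = cc k * (k⁻¹ * d * k) := by rw [← h5]; group
    calc cc k * k⁻¹ * d = cc k * (k⁻¹ * d * k) * k⁻¹ := by group
      _ = d * (cc k * k⁻¹) := by rw [← h6]; group
  have c1 := comm γ h1 h3
  have c2 := comm γ' h2 h4
  obtain ⟨k, hk⟩ : ∃ k, k = g⁻¹ * g' := ⟨_, rfl⟩
  have e : (g * iD)⁻¹ * g' = iD⁻¹ * k := by rw [hk]; group
  rw [e, ← hk]
  rw [← hk] at c1 c2
  by_cases hp : cc k * k⁻¹ = 1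
  · left
    exact real_of_cc (mul_inv_eq_one.1 hp)
  by_cases hm : cc k * k⁻¹ = -1
  · right
    apply real_of_cc
    have h5 : cc k = -1 * k := mul_inv_eq_iff_eq_mul.1 hm
    rw [map_mul, map_inv, cc_iD, h5]
    simp
  · exfalso
    apply hne
    have h5 := comm_trans hp hm c1 c2
    have e1 : γ * γ' = g * ((g⁻¹ * γ * g) * (g⁻¹ * γ' * g)) * g⁻¹ := by group
    have e2 : γ' * γ = g * ((g⁻¹ * γ' * g) * (g⁻¹ * γ * g)) * g⁻¹ := by group
    rw [e1, e2, h5]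

lemma closed_orbit_pair (Γ : Subgroup PSL2C) (hdisc : DiscreteTopology Γ) (hlat : IsLattice Γ)
    (x : XΓ Γ) (hx : IsClosed (orb Γ x Hset)) : ∃ g : SL2C, orb Γ x Hset = orb Γ (PX Γ g) Hset ∧
      ∃ γ ∈ lft Γ, ∃ γ' ∈ lft Γ, g⁻¹ * γ * g ∈ Hr ∧ g⁻¹ * γ' * g ∈ Hr ∧ γ * γ' ≠ γ' * γ := by
  obtain ⟨g0, rfl⟩ := PX_surj Γ x
  have hLF := LF_lft Γ hdisc
  obtain ⟨s, hs'⟩ := exists_good hLF g0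
  obtain ⟨g, hg⟩ : ∃ g, g = g0 * hs s := ⟨_, rfl⟩
  have ho : orb Γ (PX Γ g) Hset = orb Γ (PX Γ g0) Hset := by rw [hg]; exact orb_mul g0 (hs_mem s)
  rw [← hg] at hs'
  rw [← ho] at hx ⊢
  obtain ⟨R, hR⟩ := thick_bounded Γ hdisc hlat g
  obtain ⟨d, hd, d', hd', hr, hr', hne⟩ := nonabelian hLF (SS_closed hx) hs' R hR
  refine ⟨g, rfl, _, mem_cj.1 hd, _, mem_cj.1 hd', ?_, ?_, ?_⟩
  · have : g⁻¹ * (g * d * g⁻¹) * g = d := by group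
    rwa [this]
  · have : g⁻¹ * (g * d' * g⁻¹) * g = d' := by group
    rwa [this]
  · intro h
    apply hne
    have e1 : d * d' = g⁻¹ * ((g * d * g⁻¹) * (g * d' * g⁻¹)) * g := by group
    have e2 : d' * d = g⁻¹ * ((g * d' * g⁻¹) * (g * d * g⁻¹)) * g := by group
    rw [e1, e2, h]

lemma pair_finite (Γ : Subgroup PSL2C) (γ γ' : SL2C) (hne : γ * γ' ≠ γ' * γ) :
    {s : Set (XΓ Γ) | ∃ g : SL2C, s = orb Γ (PX Γ g) Hset ∧ g⁻¹ * γ * g ∈ Hr ∧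
      g⁻¹ * γ' * g ∈ Hr}.Finite := by
  by_cases h : ∃ g : SL2C, g⁻¹ * γ * g ∈ Hr ∧ g⁻¹ * γ' * g ∈ Hr
  · obtain ⟨g, h1, h2⟩ := h
    refine (Set.toFinite {orb Γ (PX Γ g) Hset, orb Γ (PX Γ (g * iD)) Hset}).subset ?_
    rintro s ⟨g', rfl, h3, h4⟩
    rcases noncomm_coset h1 h2 h3 h4 hne with h | h
    · left
      rw [← orb_mul g h, mul_inv_cancel_left]
    · right
      rw [Set.mem_singleton_iff, ← orb_mul (g * iD) h, mul_inv_cancel_left]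
  · convert Set.finite_empty
    ext s
    simp only [Set.mem_setOf_eq, Set.mem_empty_iff_false, iff_false]
    rintro ⟨g, -, h1, h2⟩
    exact h ⟨g, h1, h2⟩

/-- orbits attached to a noncommuting pair -/
def Fam (Γ : Subgroup PSL2C) (γ γ' : SL2C) : Set (Set (XΓ Γ)) :=
  {s | γ * γ' ≠ γ' * γ ∧ ∃ g : SL2C, s = orb Γ (PX Γ g) Hset ∧ g⁻¹ * γ * g ∈ Hr ∧
      g⁻¹ * γ' * g ∈ Hr}

lemma Fam_countable (Γ : Subgroup PSL2C) (γ γ' : SL2C) : (Fam Γ γ γ').Countable := by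
  by_cases hne : γ * γ' = γ' * γ
  · have : Fam Γ γ γ' ⊆ ∅ := fun s hs => absurd hne hs.1
    exact Set.countable_empty.mono this
  · exact (pair_finite Γ γ γ' hne).countable.mono fun s hs => hs.2

theorem main_aux
    (Γ : Subgroup PSL2C) (hdisc : DiscreteTopology Γ) (hlat : IsLattice Γ) :
    Set.Countable {s : Set (XΓ Γ) | ∃ x : XΓ Γ, s = orb Γ x Hset ∧ IsClosed s} := by
  have hc : Countable (lft Γ) := (LF_countable (LF_lft Γ hdisc)).to_subtype
  have hU : (⋃ γ : lft Γ, ⋃ γ' : lft Γ, Fam Γ γ.1 γ'.1).Countable :=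
    Set.countable_iUnion fun γ => Set.countable_iUnion fun γ' => Fam_countable Γ γ.1 γ'.1
  refine hU.mono ?_
  rintro s ⟨x, rfl, hx⟩
  obtain ⟨g, hg, γ, hγ, γ', hγ', h1, h2, hne⟩ := closed_orbit_pair Γ hdisc hlat x hx
  rw [Set.mem_iUnion]
  refine ⟨⟨γ, hγ⟩, ?_⟩
  rw [Set.mem_iUnion]
  exact ⟨⟨γ', hγ'⟩, hne, g, hg, h1, h2⟩

/-- If `Γ` is a lattice in `PSL(2,ℂ)`, then the collection of closed `H`-orbits
in `Γ\G` is countable. -/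
theorem countably_many_closed_H_orbits
    (Γ : Subgroup PSL2C) (hdisc : DiscreteTopology Γ) (hlat : IsLattice Γ) :
    Set.Countable {s : Set (XΓ Γ) | ∃ x : XΓ Γ, s = orb Γ x Hset ∧ IsClosed s} :=
  main_aux Γ hdisc hlat


end
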